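/- Every non-abelian free group of finite rank (i.e. the free group on n generators for any natural number n ≥ 2) has the R∞-property: for every automorphism φ of the free group F_n with n ≥ 2, there are infinitely many φ-twisted conjugacy classes. -/

import Mathlib

/-- `x` and `y` are `φ`-twisted conjugate: there is `g` with `y = g * x * φ(g)⁻¹`. -/
def TwistedConj {Γ : Type*} [Group Γ] (φ : Γ ≃* Γ) (x y : Γ) : Prop :=
  ∃ g : Γ, y = g * x * (φ g)⁻¹

theorem triang : ∀ (n : ℕ) (V : Type) [AddCommGroup V] [Module ℂ V] [FiniteDimensional ℂ V],
    Module.finrank ℂ V = n → ∀ f : V →ₗ[ℂ] V, ∃ (b : Module.Basis (Fin n) ℂ V) (μ : Fin n → ℂ),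
      ∀ i, f (b i) - μ i • b i ∈ Submodule.span ℂ (b '' {j | j < i}) := by
  intro n
  induction n with
  | zero =>
    intro V _ _ _ h f
    exact ⟨Module.finBasisOfFinrankEq ℂ V h, fun _ => 0, fun i => i.elim0⟩
  | succ n ih =>
    intro V _ _ _ h f
    have : Nontrivial V := Module.nontrivial_of_finrank_pos (R := ℂ) (by omega)
    obtain ⟨c, hc⟩ := Module.End.exists_eigenvalue (K := ℂ) f
    set g : V →ₗ[ℂ] V := f - c • LinearMap.id with hg
    have hr : LinearMap.range g ≠ ⊤ := by
      intro h1
      have h2 : Function.Injective g :=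
        LinearMap.injective_iff_surjective.2 (LinearMap.range_eq_top.1 h1)
      obtain ⟨v, hv⟩ := hc.exists_hasEigenvector
      apply hv.2
      apply h2
      have := hv.apply_eq_smul
      simp [hg, this]
    obtain ⟨H, hH, hle⟩ := (eq_top_or_exists_le_coatom (LinearMap.range g)).resolve_left hr
    obtain ⟨v, hv⟩ : ∃ v, v ∉ H := by
      by_contra hh
      push Not at hh
      exact hH.1 (Submodule.eq_top_iff'.2 hh)
    have hfin : Module.finrank ℂ H = n := by
      have h1 : IsSimpleModule ℂ (V ⧸ H) := isSimpleModule_iff_isCoatom.2 hH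
      have h2 : Module.finrank ℂ (V ⧸ H) = 1 := by
        exact isSimpleModule_iff_finrank_eq_one.1 h1
      have := Submodule.finrank_quotient_add_finrank H
      omega
    have hfH : ∀ x ∈ H, f x ∈ H := by
      intro x hx
      have h1 : g x ∈ H := hle ⟨x, rfl⟩
      have h2 : f x = g x + c • x := by simp [hg]
      rw [h2]; exact H.add_mem h1 (H.smul_mem _ hx)
    obtain ⟨b, μ, hb⟩ := ih H hfin (f.restrict hfH)
    have hsup : H ⊔ Submodule.span ℂ {v} = ⊤ := by
      apply hH.2
      refine lt_of_le_of_ne le_sup_left ?_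
      intro h1
      apply hv
      rw [h1]
      exact Submodule.mem_sup_right (Submodule.mem_span_singleton_self v)
    let B := Module.Basis.mkFinSnoc b v
      (by
        intro d x hx h0
        by_contra hd
        apply hv
        have : v = -(d⁻¹ • x) := by
          have : d • v = - x := by exact eq_neg_of_add_eq_zero_left h0
          rw [← smul_neg, ← this, smul_smul, inv_mul_cancel₀ hd, one_smul]
        rw [this]
        exact H.neg_mem (H.smul_mem _ hx))
      (by
        intro z
        have : z ∈ H ⊔ Submodule.span ℂ {v} := by rw [hsup]; trivial
        obtain ⟨x, hx, y, hy, rfl⟩ := Submodule.mem_sup.1 this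
        obtain ⟨d, rfl⟩ := Submodule.mem_span_singleton.1 hy
        refine ⟨-d, ?_⟩
        simpa using hx)
    have hB1 : ∀ i : Fin n, B i.castSucc = b i := by intro i; simp [B]
    have hB2 : B (Fin.last n) = v := by simp [B]
    refine ⟨B, Fin.snoc μ c, ?_⟩
    intro i
    refine Fin.lastCases ?_ ?_ i
    · rw [hB2, Fin.snoc_last]
      have h1 : f v - c • v ∈ H := hle ⟨v, by simp [hg]⟩
      have h2 : (⟨_, h1⟩ : H) ∈ Submodule.span ℂ (Set.range b) := by rw [b.span_eq]; trivial
      have h3 := Submodule.mem_map_of_mem (f := H.subtype) h2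
      rw [Submodule.map_span] at h3
      refine Submodule.span_mono ?_ h3
      rintro _ ⟨_, ⟨j, rfl⟩, rfl⟩
      exact ⟨j.castSucc, Fin.castSucc_lt_last j, hB1 j⟩
    · intro i
      rw [hB1, Fin.snoc_castSucc]
      have h3 := Submodule.mem_map_of_mem (f := H.subtype) (hb i)
      rw [Submodule.map_span] at h3
      refine Submodule.span_mono ?_ h3
      rintro _ ⟨_, ⟨j, hj, rfl⟩, rfl⟩
      exact ⟨j.castSucc, by simpa using hj, hB1 j⟩

theorem triang_det (n : ℕ) (V : Type) [AddCommGroup V] [Module ℂ V] 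
    (f : V →ₗ[ℂ] V) (b : Module.Basis (Fin n) ℂ V) (μ : Fin n → ℂ)
      (h : ∀ i, f (b i) - μ i • b i ∈ Submodule.span ℂ (b '' {j | j < i})) :
      LinearMap.det f = ∏ i, μ i := by
  have key : ∀ i j, j ≤ i → b.repr (f (b j)) i = if i = j then μ j else 0 := by
    intro i j hij
    have h1 : f (b j) = (f (b j) - μ j • b j) + μ j • b j := by abel
    have h2 : b.repr (f (b j) - μ j • b j) i = 0 := by
      have h3 := h j
      rw [Module.Basis.mem_span_image] at h3
      by_contra h4
      have := h3 (Finsupp.mem_support_iff.2 h4)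
      simp at this
      omega
    rw [h1, map_add, Finsupp.add_apply, h2]
    simp [Finsupp.single_apply, eq_comm]
  rw [← LinearMap.det_toMatrix b, Matrix.det_of_isUpperTriangular]
  · refine Finset.prod_congr rfl fun i _ => ?_
    rw [LinearMap.toMatrix_apply, key i i le_rfl, if_pos rfl]
  · intro i j hij
    rw [LinearMap.toMatrix_apply, key i j (le_of_lt hij), if_neg (fun e => absurd hij (by simp [e]))]

section
variable {n : ℕ}

/-- complex group algebra -/
abbrev GA (n : ℕ) := MonoidAlgebra ℂ (FreeGroup (Fin n))

/-- group element in the algebra -/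
noncomputable def el (g : FreeGroup (Fin n)) : GA n := MonoidAlgebra.of ℂ _ g

theorem el_mul (g h : FreeGroup (Fin n)) : el (g * h) = el g * el h := map_mul _ _ _
theorem el_one : el (1 : FreeGroup (Fin n)) = 1 := map_one _
theorem el_mul_inv (g : FreeGroup (Fin n)) : el g * el g⁻¹ = 1 := by
  rw [← el_mul, mul_inv_cancel, el_one]
theorem el_inv_mul (g : FreeGroup (Fin n)) : el g⁻¹ * el g = 1 := by
  rw [← el_mul, inv_mul_cancel, el_one]

theorem GA_ind {p : GA n → Prop} (x : GA n) (h1 : ∀ g, p (el g))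
    (h2 : ∀ x y, p x → p y → p (x + y)) (h3 : ∀ (r : ℂ) x, p x → p (r • x)) : p x :=
  MonoidAlgebra.induction_on x h1 h2 h3

/-- augmentation -/
noncomputable def aug : GA n →ₐ[ℂ] ℂ := MonoidAlgebra.lift ℂ ℂ _ 1

@[simp] theorem aug_el (g : FreeGroup (Fin n)) : aug (el g) = 1 := by
  simp [aug, el]

/-- exponent sum -/
noncomputable def zexp (j : Fin n) : FreeGroup (Fin n) →* Multiplicative ℤ :=
  FreeGroup.lift fun i => Multiplicative.ofAdd (if i = j then 1 else 0)

/-- linear evaluation of `h` on `g` -/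
noncomputable def hev (h : Fin n → ℂ) (g : FreeGroup (Fin n)) : ℂ :=
  ∑ j, h j * ((zexp j g).toAdd : ℂ)

theorem hev_mul (h : Fin n → ℂ) (g g' : FreeGroup (Fin n)) :
    hev h (g * g') = hev h g + hev h g' := by
  simp [hev, mul_add, Finset.sum_add_distrib]

theorem hev_of (h : Fin n → ℂ) (i : Fin n) : hev h (FreeGroup.of i) = h i := by
  simp [hev, zexp, apply_ite]

/-- affine permutation -/
noncomputable def affP (i j : Fin n) : Equiv.Perm (GA n) where
  toFun a := el (FreeGroup.of j) * a + (if j = i then 1 else 0)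
  invFun a := el (FreeGroup.of j)⁻¹ * (a - (if j = i then 1 else 0))
  left_inv a := by simp [← mul_assoc, el_inv_mul]
  right_inv a := by simp [← mul_assoc, el_mul_inv]

/-- affine action -/
noncomputable def affA (i : Fin n) : FreeGroup (Fin n) →* Equiv.Perm (GA n) :=
  FreeGroup.lift (affP i)

/-- Fox derivative on group elements -/
noncomputable def fox0 (i : Fin n) (g : FreeGroup (Fin n)) : GA n := affA i g 0

theorem affA_apply (i : Fin n) (g : FreeGroup (Fin n)) : ∀ a,
    affA i g a = el g * a + fox0 i g := by
  induction g using FreeGroup.induction_on with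
  | C1 => intro a; simp [fox0, el_one]
  | of j => intro a; simp [fox0, affA, affP]
  | inv_of j _ => intro a; simp [fox0, affA, affP, Equiv.Perm.inv_def, mul_add, sub_eq_add_neg]
  | mul x y hx hy =>
    intro a
    simp only [fox0, map_mul, Equiv.Perm.mul_apply] at *
    rw [hy a, hx, hx (affA i y 0), el_mul, mul_add, mul_assoc, add_assoc]

theorem fox0_mul (i : Fin n) (g g' : FreeGroup (Fin n)) :
    fox0 i (g * g') = fox0 i g + el g * fox0 i g' := by
  rw [fox0, map_mul, Equiv.Perm.mul_apply, affA_apply, add_comm]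
  rfl

/-- Fox derivative in direction `h` on group elements -/
noncomputable def foxh (h : Fin n → ℂ) (g : FreeGroup (Fin n)) : GA n := ∑ i, h i • fox0 i g

theorem foxh_mul (h : Fin n → ℂ) (g g' : FreeGroup (Fin n)) :
    foxh h (g * g') = foxh h g + el g * foxh h g' := by
  simp [foxh, fox0_mul, Finset.sum_add_distrib, Finset.mul_sum]

theorem aug_foxh (h : Fin n → ℂ) (g : FreeGroup (Fin n)) : aug (foxh h g) = hev h g := by
  let p : FreeGroup (Fin n) →* Multiplicative ℂ :=
    MonoidHom.mk' (fun g => Multiplicative.ofAdd (aug (foxh h g))) (by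
      intro a b; simp [foxh_mul])
  let q : FreeGroup (Fin n) →* Multiplicative ℂ :=
    MonoidHom.mk' (fun g => Multiplicative.ofAdd (hev h g)) (by
      intro a b; simp [hev_mul])
  have : p = q := by
    ext i
    simp [p, q, hev_of, foxh, fox0, affA, affP, apply_ite]
  exact congrArg Multiplicative.toAdd (DFunLike.congr_fun this g)

/-- Fox derivative, linear -/
noncomputable def fox (h : Fin n → ℂ) : GA n →ₗ[ℂ] GA n :=
  Finsupp.linearCombination ℂ (foxh h) ∘ₗ (MonoidAlgebra.coeffLinearEquiv ℂ).toLinearMap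

theorem fox_el (h : Fin n → ℂ) (g : FreeGroup (Fin n)) : fox h (el g) = foxh h g := by
  simp [fox, el, MonoidAlgebra.of]

theorem fox_mul (h : Fin n → ℂ) (a b : GA n) :
    fox h (a * b) = aug b • fox h a + a * fox h b := by
  induction a using GA_ind with
  | h1 g =>
    induction b using GA_ind with
    | h1 g' => rw [← el_mul, fox_el, fox_el, fox_el, foxh_mul, aug_el, one_smul]
    | h2 x y hx hy => rw [mul_add, map_add, hx, hy, map_add, map_add, add_smul, mul_add]; abel
    | h3 r x hx => 
      rw [mul_smul_comm, map_smul, hx, map_smul, map_smul, smul_add, smul_assoc, mul_smul_comm]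
  | h2 x y hx hy => rw [add_mul, map_add, hx, hy, map_add, smul_add, add_mul]; abel
  | h3 r x hx => 
    rw [smul_mul_assoc, map_smul, hx, map_smul, smul_add, smul_comm, smul_mul_assoc]

theorem fox_add (h h' : Fin n → ℂ) : fox (h + h') = fox h + fox h' := by
  refine LinearMap.ext fun a => ?_
  induction a using GA_ind with
  | h1 g => simp [fox_el, foxh, add_smul, Finset.sum_add_distrib]
  | h2 x y hx hy => simp_all; abel
  | h3 r x hx => simp_all

theorem fox_smul (c : ℂ) (h : Fin n → ℂ) : fox (c • h) = c • fox h := by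
  refine LinearMap.ext fun a => ?_
  induction a using GA_ind with
  | h1 g => simp [fox_el, foxh, Finset.smul_sum, mul_smul]
  | h2 x y hx hy => simp_all
  | h3 r x hx => simp_all

/-- augmentation ideal -/
noncomputable def augI (n : ℕ) : Submodule ℂ (GA n) := LinearMap.ker (aug (n := n)).toLinearMap

theorem mem_augI (a : GA n) : a ∈ augI n ↔ aug a = 0 := by simp [augI]

theorem el_sub_mem (g : FreeGroup (Fin n)) : el g - 1 ∈ augI n := by simp [mem_augI]

/-- powers of the augmentation ideal -/
noncomputable def J (n : ℕ) : ℕ → Submodule ℂ (GA n)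
  | 0 => ⊤
  | k + 1 => J n k * augI n

theorem top_mul_augI : ⊤ * augI n ≤ augI n := by
  rw [Submodule.mul_le]; intro a _ b hb
  rw [mem_augI] at *; simp [hb]

theorem augI_mul_top : augI n * ⊤ ≤ augI n := by
  rw [Submodule.mul_le]; intro a hb b _
  rw [mem_augI] at *; simp [hb]

theorem J_mul_top (k : ℕ) : J n k * ⊤ ≤ J n k := by
  cases k with
  | zero => exact le_top
  | succ k => 
    rw [J, mul_assoc]
    exact mul_le_mul' le_rfl augI_mul_top

theorem top_mul_J (k : ℕ) : ⊤ * J n k ≤ J n k := by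
  induction k with
  | zero => exact le_top
  | succ k ih => 
    rw [J, ← mul_assoc]
    exact mul_le_mul' ih le_rfl

theorem J_mul_right {k : ℕ} {a : GA n} (ha : a ∈ J n k) (b : GA n) : a * b ∈ J n k :=
  J_mul_top k (Submodule.mul_mem_mul ha trivial)

theorem J_mul_left {k : ℕ} {a : GA n} (ha : a ∈ J n k) (b : GA n) : b * a ∈ J n k :=
  top_mul_J k (Submodule.mul_mem_mul trivial ha)

theorem J_mul_J (j k : ℕ) : J n j * J n k ≤ J n (j + k) := by
  induction k with
  | zero => exact J_mul_top j
  | succ k ih => 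
    rw [J, ← mul_assoc]
    exact mul_le_mul' ih le_rfl

theorem J_mul {j k : ℕ} {a b : GA n} (ha : a ∈ J n j) (hb : b ∈ J n k) : a * b ∈ J n (j + k) :=
  J_mul_J j k (Submodule.mul_mem_mul ha hb)

theorem J_succ_le (k : ℕ) : J n (k + 1) ≤ J n k :=
  (mul_le_mul' le_rfl le_top).trans (J_mul_top k)

theorem J_anti : Antitone (J n) := antitone_nat_of_succ_le J_succ_le

theorem J_one : J n 1 = augI n := by
  apply le_antisymm
  · exact top_mul_augI
  · intro a ha
    have := Submodule.mul_mem_mul (show (1 : GA n) ∈ (⊤ : Submodule ℂ (GA n)) from trivial) ha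
    rwa [one_mul] at this

theorem fox_J (h : Fin n → ℂ) (k : ℕ) : ∀ a ∈ J n (k + 1), fox h a ∈ J n k := by
  intro a ha
  refine Submodule.mul_induction_on ha ?_ ?_
  · intro x hx y hy
    rw [fox_mul, (mem_augI y).1 hy, zero_smul, zero_add]
    exact J_mul_right hx _
  · intro x y hx hy
    rw [map_add]; exact add_mem hx hy

/-- iterated Fox functional -/
noncomputable def cf : List (Fin n → ℂ) → (GA n →ₗ[ℂ] ℂ)
  | [] => aug.toLinearMap
  | h :: l => cf l ∘ₗ fox h

theorem cf_vanish (l : List (Fin n → ℂ)) : ∀ a ∈ J n (l.length + 1), cf l a = 0 := by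
  induction l with
  | nil => intro a ha; exact (mem_augI a).1 (by rwa [← J_one])
  | cons h l ih => intro a ha; exact ih _ (fox_J h _ a ha)

theorem cf_mul (z : List (Fin n → ℂ)) (a : GA n) (ha : a ∈ J n z.length) 
    (y : List (Fin n → ℂ)) : ∀ b ∈ J n y.length, cf (y ++ z) (a * b) = cf y b * cf z a := by
  induction y with
  | nil =>
    intro b _
    have h1 : a * b = aug b • a + a * (b - algebraMap ℂ _ (aug b)) := by
      rw [mul_sub, Algebra.smul_def, Algebra.commutes]; abel
    have h2 : a * (b - algebraMap ℂ _ (aug b)) ∈ J n (z.length + 1) := 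
      Submodule.mul_mem_mul ha (by
        rw [mem_augI, map_sub, AlgHom.commutes]; exact sub_self _)
    rw [List.nil_append, h1, map_add, map_smul, cf_vanish z _ h2]
    simp [cf]
  | cons h y ih =>
    intro b hb
    have hb' : aug b = 0 := by
      rw [← mem_augI, ← J_one]
      exact J_anti (by simp) hb
    change cf (y ++ z) (fox h (a * b)) = cf y (fox h b) * _
    rw [fox_mul, hb', zero_smul, zero_add]
    exact ih _ (fox_J h _ b hb)

theorem cf_one_el (h : Fin n → ℂ) (g : FreeGroup (Fin n)) : cf [h] (el g) = hev h g := by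
  simp [cf, fox_el, aug_foxh]

end

section
variable {n : ℕ}

/-- span of the linear parts of the generators -/
noncomputable def XX (n : ℕ) : Submodule ℂ (GA n) :=
  Submodule.span ℂ (Set.range fun i : Fin n => el (FreeGroup.of i) - 1)

theorem sub_aug_mem (M : Submodule ℂ (GA n)) (h : ∀ g, el g - 1 ∈ M) (a : GA n) :
    a - aug a • 1 ∈ M := by
  induction a using GA_ind with
  | h1 g => simpa using h g
  | h2 x y hx hy =>
    have := add_mem hx hy
    rw [map_add, add_smul]
    convert this using 1; abel
  | h3 r x hx =>
    have := M.smul_mem r hx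
    rw [map_smul, smul_assoc, ← smul_sub]; exact this

theorem augI_le (M : Submodule ℂ (GA n)) (h : ∀ g, el g - 1 ∈ M) : augI n ≤ M := by
  intro a ha
  have := sub_aug_mem M h a
  rwa [(mem_augI a).1 ha, zero_smul, sub_zero] at this

theorem mul_mem_J2 (g h : FreeGroup (Fin n)) : (el g - 1) * (el h - 1) ∈ J n 2 :=
  J_mul (j := 1) (k := 1) (by rw [J_one]; exact el_sub_mem g) (by rw [J_one]; exact el_sub_mem h)

theorem augI_le_XX : augI n ≤ XX n ⊔ J n 2 := by
  apply augI_le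
  have hm : ∀ x y : FreeGroup (Fin n), el x - 1 ∈ XX n ⊔ J n 2 → el y - 1 ∈ XX n ⊔ J n 2 →
      el (x * y) - 1 ∈ XX n ⊔ J n 2 := by
    intro x y hx hy
    have h1 : el (x * y) - 1 = (el x - 1) + (el y - 1) + (el x - 1) * (el y - 1) := by
      rw [el_mul]; noncomm_ring
    rw [h1]
    exact add_mem (add_mem hx hy) (Submodule.mem_sup_right (mul_mem_J2 x y))
  intro g
  induction g using FreeGroup.induction_on with
  | C1 => simp [el_one]
  | of j => exact Submodule.mem_sup_left (Submodule.subset_span ⟨j, rfl⟩)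
  | inv_of j hj =>
    have h1 : el (FreeGroup.of j)⁻¹ - 1 = -(el (FreeGroup.of j) - 1)
        - (el (FreeGroup.of j) - 1) * (el (FreeGroup.of j)⁻¹ - 1) := by
      simp only [sub_mul, mul_sub, el_mul_inv]; noncomm_ring
    rw [h1]
    exact sub_mem (neg_mem hj) (Submodule.mem_sup_right (mul_mem_J2 _ _))
  | mul x y hx hy => exact hm x y hx hy

theorem XX_le : XX n ≤ augI n := by
  rw [XX, Submodule.span_le]
  rintro _ ⟨i, rfl⟩
  exact el_sub_mem _

theorem J_le_XX (k : ℕ) : J n k ≤ XX n ^ k ⊔ J n (k + 1) := by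
  induction k with
  | zero =>
    intro a _
    rw [J_one, pow_zero]
    have h1 : a = aug a • 1 + (a - aug a • 1) := by abel
    rw [h1]
    refine add_mem (Submodule.mem_sup_left ?_) (Submodule.mem_sup_right ?_)
    · exact Submodule.smul_mem _ _ (Submodule.one_le.1 le_rfl)
    · exact sub_aug_mem _ el_sub_mem a
  | succ k ih =>
    calc J n (k + 1) = J n k * augI n := rfl
      _ ≤ (XX n ^ k ⊔ J n (k + 1)) * augI n := mul_le_mul' ih le_rfl
      _ = XX n ^ k * augI n ⊔ J n (k + 2) := by rw [Submodule.sup_mul]; rfl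
      _ ≤ XX n ^ k * (XX n ⊔ J n 2) ⊔ J n (k + 2) :=
          sup_le_sup (mul_le_mul' le_rfl augI_le_XX) le_rfl
      _ = (XX n ^ (k + 1) ⊔ XX n ^ k * J n 2) ⊔ J n (k + 2) := by rw [Submodule.mul_sup, pow_succ]
      _ ≤ _ := by
          refine sup_le (sup_le le_sup_left (le_trans ?_ le_sup_right)) le_sup_right
          have : XX n ^ k ≤ J n k := by
            clear ih
            induction k with
            | zero => exact le_top
            | succ k ih => rw [pow_succ]; exact mul_le_mul' ih XX_le
          exact (mul_le_mul' this le_rfl).trans (J_mul_J k 2)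

theorem XX_fg (k : ℕ) : (XX n ^ k).FG := by
  apply Submodule.FG.pow
  exact Submodule.fg_span (Set.finite_range _)

/-- dimension subgroups (as predicates) -/
def Dm (k : ℕ) (g : FreeGroup (Fin n)) : Prop := el g - 1 ∈ J n k

theorem Dm_mul {k : ℕ} {g h : FreeGroup (Fin n)} (hg : Dm k g) (hh : Dm k h) : Dm k (g * h) := by
  have h1 : el (g * h) - 1 = (el g - 1) * el h + (el h - 1) := by rw [el_mul]; noncomm_ring
  rw [Dm, h1]
  exact add_mem (J_mul_right hg _) hh

theorem Dm_inv {k : ℕ} {g : FreeGroup (Fin n)} (hg : Dm k g) : Dm k g⁻¹ := by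
  have h1 : el g⁻¹ - 1 = - (el g⁻¹ * (el g - 1)) := by rw [mul_sub, el_inv_mul]; noncomm_ring
  rw [Dm, h1]
  exact neg_mem (J_mul_left hg _)

theorem Dm_conj {k : ℕ} {g : FreeGroup (Fin n)} (hg : Dm k g) (h : FreeGroup (Fin n)) :
    Dm k (h * g * h⁻¹) := by
  have h1 : el (h * g * h⁻¹) - 1 = el h * (el g - 1) * el h⁻¹ := by
    rw [mul_sub, sub_mul, el_mul, el_mul, mul_one, el_mul_inv]
  rw [Dm, h1]
  exact J_mul_right (J_mul_left hg _) _

theorem Dm_pow {k : ℕ} {g : FreeGroup (Fin n)} (hg : Dm k g) (m : ℕ) : Dm k (g ^ m) := by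
  induction m with
  | zero => simp [Dm, el_one]
  | succ m ih => rw [pow_succ]; exact Dm_mul ih hg

/-- Lie part -/
noncomputable def Li (n k : ℕ) : Submodule ℂ (GA n) :=
  Submodule.span ℂ ((fun g => el g - 1) '' {g | Dm k g}) ⊔ J n (k + 1)

theorem Li_le (k : ℕ) : Li n k ≤ J n k := by
  refine sup_le (Submodule.span_le.2 ?_) (J_succ_le k)
  rintro _ ⟨g, hg, rfl⟩
  exact hg

theorem el_mem_Li {k : ℕ} {g : FreeGroup (Fin n)} (hg : Dm k g) : el g - 1 ∈ Li n k :=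
  Submodule.mem_sup_left (Submodule.subset_span ⟨g, hg, rfl⟩)

theorem augI_le_Li : augI n ≤ Li n 1 :=
  augI_le _ fun g => el_mem_Li (by rw [Dm, J_one]; exact el_sub_mem g)

theorem Li_bracket_el {j k : ℕ} {g h : FreeGroup (Fin n)} (hg : Dm j g) (hh : Dm k h) :
    (el g - 1) * (el h - 1) - (el h - 1) * (el g - 1) ∈ Li n (j + k) := by
  set u := (el g - 1) * (el h - 1) - (el h - 1) * (el g - 1) with hu
  have hu' : u = el g * el h - el h * el g := by rw [hu]; noncomm_ring
  have huJ : u ∈ J n (j + k) := by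
    refine sub_mem (J_mul hg hh) ?_
    rw [add_comm]; exact J_mul hh hg
  have h1 : el (g * h * (g⁻¹ * h⁻¹)) - 1 = u + u * (el (g⁻¹ * h⁻¹) - 1) := by
    have h2 : el h * el g * el (g⁻¹ * h⁻¹) = 1 := by
      rw [← el_mul, ← el_mul, ← el_one]; congr 1; group
    rw [mul_sub, mul_one, add_sub_cancel, hu', sub_mul, h2, el_mul (g * h), el_mul g h]
  have h3 : u * (el (g⁻¹ * h⁻¹) - 1) ∈ J n (j + k + 1) :=
    Submodule.mul_mem_mul huJ (el_sub_mem _)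
  have h4 : Dm (j + k) (g * h * (g⁻¹ * h⁻¹)) := by
    rw [Dm, h1]; exact add_mem huJ (J_succ_le _ h3)
  have h5 : u = (el (g * h * (g⁻¹ * h⁻¹)) - 1) - u * (el (g⁻¹ * h⁻¹) - 1) := by rw [h1]; abel
  rw [h5]
  exact sub_mem (el_mem_Li h4) (Submodule.mem_sup_right h3)

theorem Li_bracket {j k : ℕ} {a b : GA n} (ha : a ∈ Li n j) (hb : b ∈ Li n k) :
    a * b - b * a ∈ Li n (j + k) := by
  have step1 : ∀ g, Dm j g → ∀ b ∈ Li n k,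
      (el g - 1) * b - b * (el g - 1) ∈ Li n (j + k) := by
    intro g hg b hb
    let L : GA n →ₗ[ℂ] GA n := LinearMap.mulLeft ℂ (el g - 1) - LinearMap.mulRight ℂ (el g - 1)
    have : Li n k ≤ (Li n (j + k)).comap L := by
      refine sup_le (Submodule.span_le.2 ?_) ?_
      · rintro _ ⟨h, hh, rfl⟩
        exact Li_bracket_el hg hh
      · intro x hx
        refine Submodule.mem_sup_right (sub_mem (J_mul (j := j) (k := k + 1) hg hx) ?_)
        have := J_mul hx hg
        rwa [show k + 1 + j = j + k + 1 by omega] at this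
    exact this hb
  let R : GA n →ₗ[ℂ] GA n := LinearMap.mulRight ℂ b - LinearMap.mulLeft ℂ b
  have : Li n j ≤ (Li n (j + k)).comap R := by
    refine sup_le (Submodule.span_le.2 ?_) ?_
    · rintro _ ⟨h, hh, rfl⟩
      exact step1 h hh b hb
    · intro x hx
      refine Submodule.mem_sup_right (sub_mem ?_ ?_)
      · have := J_mul hx (Li_le k hb)
        rwa [show j + 1 + k = j + k + 1 by omega] at this
      · have := J_mul (Li_le k hb) hx
        rwa [show k + (j + 1) = j + k + 1 by omega] at this
  exact this ha

/-- linear algebra: bijectivity on invariant subspaces -/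
theorem lin_lemma {U : Type*} [AddCommGroup U] [Module ℂ U] (f : U →ₗ[ℂ] U) (W : Submodule ℂ U)
    (hW : W.FG) (h1 : W ≤ W.map f) (h2 : ∀ x ∈ W, f x ∈ W) :
    (∀ x ∈ W, f x = 0 → x = 0) ∧
    ∀ K : Submodule ℂ U, K ≤ W → (∀ x ∈ K, f x ∈ K) → K ≤ K.map f := by
  have : FiniteDimensional ℂ W := Module.Finite.iff_fg.2 hW
  have hs : Function.Surjective (f.restrict h2) := by
    rintro ⟨y, hy⟩
    obtain ⟨x, hx, rfl⟩ := h1 hy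
    exact ⟨⟨x, hx⟩, rfl⟩
  have hi : Function.Injective (f.restrict h2) := LinearMap.injective_iff_surjective.2 hs
  have h3 : ∀ x ∈ W, f x = 0 → x = 0 := by
    intro x hx h0
    have : (⟨x, hx⟩ : W) = 0 := hi (by ext; simpa using h0)
    exact congrArg Subtype.val this
  refine ⟨h3, ?_⟩
  intro K hK hf
  have : FiniteDimensional ℂ K := Submodule.finiteDimensional_of_le hK
  have hi' : Function.Injective (f.restrict hf) := by
    rw [injective_iff_map_eq_zero]
    rintro ⟨x, hx⟩ h0
    ext
    exact h3 x (hK hx) (congrArg Subtype.val h0)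
  intro y hy
  obtain ⟨x, hx⟩ := LinearMap.injective_iff_surjective.1 hi' ⟨y, hy⟩
  exact ⟨x, x.2, congrArg Subtype.val hx⟩

end

section
variable {n : ℕ}

/-- induced map on the group algebra -/
noncomputable def Phi (φ : FreeGroup (Fin n) ≃* FreeGroup (Fin n)) : GA n →ₐ[ℂ] GA n :=
  MonoidAlgebra.lift ℂ (GA n) _ ((MonoidAlgebra.of ℂ _).comp φ.toMonoidHom)

theorem Phi_el (φ : FreeGroup (Fin n) ≃* FreeGroup (Fin n)) (g : FreeGroup (Fin n)) :
    Phi φ (el g) = el (φ g) := by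
  simp [Phi, el]

theorem aug_Phi (φ : FreeGroup (Fin n) ≃* FreeGroup (Fin n)) (a : GA n) :
    aug (Phi φ a) = aug a := by
  induction a using GA_ind with
  | h1 g => simp [Phi_el]
  | h2 x y hx hy => simp [hx, hy]
  | h3 r x hx => simp [hx]

theorem Phi_J (φ : FreeGroup (Fin n) ≃* FreeGroup (Fin n)) (k : ℕ) :
    ∀ a ∈ J n k, Phi φ a ∈ J n k := by
  induction k with
  | zero => intro a _; trivial
  | succ k ih =>
    intro a ha
    refine Submodule.mul_induction_on ha ?_ ?_
    · intro x hx y hy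
      rw [map_mul]
      refine Submodule.mul_mem_mul (ih x hx) ?_
      rw [mem_augI, aug_Phi]; exact (mem_augI y).1 hy
    · intro x y hx hy
      rw [map_add]; exact add_mem hx hy

theorem Dm_phi (φ : FreeGroup (Fin n) ≃* FreeGroup (Fin n)) {k : ℕ} {g : FreeGroup (Fin n)}
    (hg : Dm k g) : Dm k (φ g) := by
  have := Phi_J φ k _ hg
  rwa [map_sub, map_one, Phi_el] at this

theorem Phi_Li (φ : FreeGroup (Fin n) ≃* FreeGroup (Fin n)) (k : ℕ) :
    ∀ a ∈ Li n k, Phi φ a ∈ Li n k := by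
  have : Li n k ≤ (Li n k).comap (Phi φ).toLinearMap := by
    refine sup_le (Submodule.span_le.2 ?_) ?_
    · rintro _ ⟨g, hg, rfl⟩
      have := el_mem_Li (Dm_phi φ hg)
      simpa [Phi_el] using this
    · intro x hx
      exact Submodule.mem_sup_right (Phi_J φ _ x hx)
  exact this

/-- quotient map -/
noncomputable def qq (n k : ℕ) : GA n →ₗ[ℂ] GA n ⧸ J n (k + 1) := (J n (k + 1)).mkQ

theorem qq_eq_zero (k : ℕ) (a : GA n) : qq n k a = 0 ↔ a ∈ J n (k + 1) := by
  simp [qq]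

/-- `1 - φ` on the quotient -/
noncomputable def psi (φ : FreeGroup (Fin n) ≃* FreeGroup (Fin n)) (k : ℕ) :
    (GA n ⧸ J n (k + 1)) →ₗ[ℂ] (GA n ⧸ J n (k + 1)) :=
  LinearMap.id - (J n (k + 1)).mapQ (J n (k + 1)) (Phi φ).toLinearMap (Phi_J φ (k + 1))

theorem psi_qq (φ : FreeGroup (Fin n) ≃* FreeGroup (Fin n)) (k : ℕ) (a : GA n) :
    psi φ k (qq n k a) = qq n k (a - Phi φ a) := by
  rw [map_sub]; rfl

/-- image of the Lie part -/
noncomputable def WW (n k : ℕ) : Submodule ℂ (GA n ⧸ J n (k + 1)) := (Li n k).map (qq n k)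

theorem WW_fg (k : ℕ) : (WW n k).FG := by
  have h1 : WW n k ≤ (XX n ^ k).map (qq n k) := by
    rw [WW, Submodule.map_le_iff_le_comap]
    intro a ha
    obtain ⟨x, hx, y, hy, rfl⟩ := Submodule.mem_sup.1 (J_le_XX k (Li_le k ha))
    refine ⟨x, hx, ?_⟩
    rw [map_add, (qq_eq_zero k y).2 hy, add_zero]
  have h2 := (XX_fg (n := n) k).map (qq n k)
  have : FiniteDimensional ℂ ((XX n ^ k).map (qq n k)) := Module.Finite.iff_fg.2 h2
  have := Submodule.finiteDimensional_of_le h1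
  exact Module.Finite.iff_fg.1 this

theorem WW_psi (φ : FreeGroup (Fin n) ≃* FreeGroup (Fin n)) (k : ℕ) :
    ∀ x ∈ WW n k, psi φ k x ∈ WW n k := by
  rintro _ ⟨a, ha, rfl⟩
  rw [psi_qq]
  exact ⟨_, sub_mem ha (Phi_Li φ k a ha), rfl⟩

theorem qq_mul {k : ℕ} (hk : 1 ≤ k) {g h : FreeGroup (Fin n)} (hg : Dm k g) (hh : Dm k h) :
    qq n k (el (g * h) - 1) = qq n k (el g - 1) + qq n k (el h - 1) := by
  have h1 : el (g * h) - 1 = (el g - 1) + (el h - 1) + (el g - 1) * (el h - 1) := by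
    rw [el_mul]; noncomm_ring
  have h2 : (el g - 1) * (el h - 1) ∈ J n (k + 1) := J_anti (by omega) (J_mul hg hh)
  rw [h1, map_add, map_add, (qq_eq_zero k _).2 h2, add_zero]

theorem qq_pow {k : ℕ} (hk : 1 ≤ k) {g : FreeGroup (Fin n)} (hg : Dm k g) (m : ℕ) :
    qq n k (el (g ^ m) - 1) = (m : ℂ) • qq n k (el g - 1) := by
  induction m with
  | zero => simp [el_one]
  | succ m ih =>
    rw [pow_succ, qq_mul hk (Dm_pow hg m) hg, ih]
    push_cast
    rw [add_smul, one_smul]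

theorem twisted_equiv {Γ : Type*} [Group Γ] (φ : Γ ≃* Γ) : Equivalence (TwistedConj φ) where
  refl x := ⟨1, by simp⟩
  symm := by
    rintro x y ⟨g, rfl⟩
    exact ⟨g⁻¹, by simp [mul_assoc]⟩
  trans := by
    rintro x y z ⟨g, rfl⟩ ⟨h, rfl⟩
    exact ⟨h * g, by simp [mul_assoc]⟩

/-- fixed points modulo `Dm k` are trivial -/
def PP (φ : FreeGroup (Fin n) ≃* FreeGroup (Fin n)) (k : ℕ) : Prop :=
  ∀ g, Dm k (g * (φ g)⁻¹) → Dm k g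

theorem surj_step (φ : FreeGroup (Fin n) ≃* FreeGroup (Fin n)) [Finite (Quot (TwistedConj φ))]
    {k : ℕ} (hk : 1 ≤ k) (hP : PP φ k) : WW n k ≤ (WW n k).map (psi φ k) := by
  rw [WW, Submodule.map_le_iff_le_comap]
  refine sup_le (Submodule.span_le.2 ?_) ?_
  · rintro _ ⟨z, hz, rfl⟩
    have hz : Dm k z := hz
    obtain ⟨m, m', hne, he⟩ := Finite.exists_ne_map_eq_of_infinite
      (fun m : ℕ => Quot.mk (TwistedConj φ) (z ^ m))
    obtain ⟨g, hg⟩ : TwistedConj φ (z ^ m) (z ^ m') :=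
      (twisted_equiv φ).eqvGen_iff.1 (Quot.eqvGen_exact he)
    have hgD : Dm k g := by
      apply hP
      have h1 : g * (φ g)⁻¹ = z ^ m' * (φ g * (z ^ m)⁻¹ * (φ g)⁻¹) := by
        rw [hg]; group
      rw [h1]
      exact Dm_mul (Dm_pow hz _) (Dm_conj (Dm_inv (Dm_pow hz _)) _)
    have h2 : z ^ m' * φ g = g * z ^ m := by rw [hg]; group
    have h3 := congrArg (fun t => qq n k (el t - 1)) h2
    rw [qq_mul hk (Dm_pow hz _) (Dm_phi φ hgD), qq_mul hk hgD (Dm_pow hz _), qq_pow hk hz,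
      qq_pow hk hz] at h3
    have hne' : ((m' : ℂ) - m) ≠ 0 := by
      rw [sub_ne_zero]; exact_mod_cast hne.symm
    have h4 : psi φ k (qq n k (el g - 1)) = ((m' : ℂ) - m) • qq n k (el z - 1) := by
      rw [psi_qq, map_sub (Phi φ), map_one, Phi_el, map_sub, sub_smul]
      rw [sub_eq_sub_iff_add_eq_add, ← h3]
    refine ⟨((m' : ℂ) - m)⁻¹ • qq n k (el g - 1), ?_, ?_⟩
    · exact Submodule.smul_mem _ _ ⟨_, el_mem_Li hgD, rfl⟩
    · rw [map_smul, h4, smul_smul, inv_mul_cancel₀ hne', one_smul]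
  · intro x hx
    rw [Submodule.mem_comap, (qq_eq_zero k x).2 hx]
    exact zero_mem _

theorem PP_succ (φ : FreeGroup (Fin n) ≃* FreeGroup (Fin n)) [Finite (Quot (TwistedConj φ))]
    {k : ℕ} (hk : 1 ≤ k) (hP : PP φ k) : PP φ (k + 1) := by
  intro g hg
  have hgk : Dm k (g * (φ g)⁻¹) := J_succ_le k hg
  have h1 : Dm k g := hP g hgk
  have h2 := (lin_lemma (psi φ k) (WW n k) (WW_fg k) (surj_step φ hk hP) (WW_psi φ k)).1
    (qq n k (el g - 1)) ⟨_, el_mem_Li h1, rfl⟩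
  rw [qq_eq_zero] at h2
  apply h2
  have h3 := qq_mul hk hgk (Dm_phi φ h1)
  rw [inv_mul_cancel_right, (qq_eq_zero k _).2 hg, zero_add] at h3
  rw [psi_qq, map_sub (Phi φ), map_one, Phi_el, map_sub, h3, sub_self]

theorem PP_all (φ : FreeGroup (Fin n) ≃* FreeGroup (Fin n)) [Finite (Quot (TwistedConj φ))]
    {k : ℕ} (hk : 1 ≤ k) : PP φ k := by
  induction k, hk using Nat.le_induction with
  | base => intro g _; rw [Dm, J_one]; exact el_sub_mem g
  | succ k hk ih => exact PP_succ φ hk ih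

/-- exponent matrix of `φ` -/
noncomputable def Mat (φ : FreeGroup (Fin n) ≃* FreeGroup (Fin n)) : Matrix (Fin n) (Fin n) ℤ :=
  Matrix.of fun i j => (zexp j (φ (FreeGroup.of i))).toAdd

theorem zexp_phi (φ : FreeGroup (Fin n) ≃* FreeGroup (Fin n)) (j : Fin n)
    (g : FreeGroup (Fin n)) :
    (zexp j (φ g)).toAdd = ∑ i, (zexp i g).toAdd * Mat φ i j := by
  let p : FreeGroup (Fin n) →* Multiplicative ℤ := (zexp j).comp φ.toMonoidHom
  let q : FreeGroup (Fin n) →* Multiplicative ℤ :=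
    MonoidHom.mk' (fun g => Multiplicative.ofAdd (∑ i, (zexp i g).toAdd * Mat φ i j)) (by
      intro a b; simp [add_mul, Finset.sum_add_distrib])
  have : p = q := by
    ext i
    simp [p, q, zexp, Mat]
  exact congrArg Multiplicative.toAdd (DFunLike.congr_fun this g)

theorem Mat_mul (φ : FreeGroup (Fin n) ≃* FreeGroup (Fin n)) : Mat φ.symm * Mat φ = 1 := by
  ext k j
  rw [Matrix.mul_apply]
  have := zexp_phi φ j (φ.symm (FreeGroup.of k))
  rw [MulEquiv.apply_symm_apply] at this
  rw [show ∑ i, Mat φ.symm k i * Mat φ i j =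
    ∑ i, (zexp i (φ.symm (FreeGroup.of k))).toAdd * Mat φ i j from rfl, ← this]
  simp [zexp, Matrix.one_apply]

/-- the dual map -/
noncomputable def fs (φ : FreeGroup (Fin n) ≃* FreeGroup (Fin n)) :
    (Fin n → ℂ) →ₗ[ℂ] (Fin n → ℂ) :=
  Matrix.toLin' ((Mat φ).map (Int.castRingHom ℂ))

theorem fs_det (φ : FreeGroup (Fin n) ≃* FreeGroup (Fin n)) : LinearMap.det (fs φ) ^ 2 = 1 := by
  rw [fs, LinearMap.det_toLin']
  have h1 : IsUnit (Mat φ).det := by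
    have := congrArg Matrix.det (Mat_mul φ)
    rw [Matrix.det_mul, Matrix.det_one] at this
    exact IsUnit.of_mul_eq_one _ (by rw [mul_comm]; exact this)
  have h2 : (Mat φ).det ^ 2 = 1 := by
    rcases Int.isUnit_iff.1 h1 with h | h <;> simp [h]
  have h3 : ((Mat φ).map (Int.castRingHom ℂ)).det = ((Mat φ).det : ℂ) := by
    have := (RingHom.map_det (Int.castRingHom ℂ) (Mat φ)).symm
    simpa using this
  rw [h3]
  exact_mod_cast h2

theorem hev_phi (φ : FreeGroup (Fin n) ≃* FreeGroup (Fin n)) (h : Fin n → ℂ)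
    (g : FreeGroup (Fin n)) : hev h (φ g) = hev (fs φ h) g := by
  simp only [hev, zexp_phi, fs, Matrix.toLin'_apply, Matrix.mulVec, dotProduct, Matrix.map_apply]
  push_cast
  simp only [Finset.mul_sum, Finset.sum_mul]
  rw [Finset.sum_comm]
  refine Finset.sum_congr rfl fun i _ => Finset.sum_congr rfl fun j _ => ?_
  simp; ring

theorem cf_one_Phi (φ : FreeGroup (Fin n) ≃* FreeGroup (Fin n)) (h : Fin n → ℂ) (a : GA n) :
    cf [h] (Phi φ a) = cf [fs φ h] a := by
  induction a using GA_ind with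
  | h1 g => rw [Phi_el, cf_one_el, cf_one_el, hev_phi]
  | h2 x y hx hy => simp only [map_add, hx, hy]
  | h3 r x hx => simp only [map_smul, hx]

theorem cf_Phi (φ : FreeGroup (Fin n) ≃* FreeGroup (Fin n)) (l : List (Fin n → ℂ)) :
    ∀ a ∈ J n l.length, cf l (Phi φ a) = cf (l.map (fs φ)) a := by
  induction l with
  | nil => intro a _; exact aug_Phi φ a
  | cons h l ih =>
    intro a ha
    refine Submodule.mul_induction_on ha ?_ ?_
    · intro x hx y hy
      rw [← J_one] at hy
      have h1 := cf_mul l (Phi φ x) (Phi_J φ _ x hx) [h] (Phi φ y) (Phi_J φ _ y hy)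
      have h2 := cf_mul (l.map (fs φ)) x (by simpa using hx) [fs φ h] y hy
      rw [map_mul, List.map_cons]
      rw [List.singleton_append] at h1 h2
      rw [h1, h2, cf_one_Phi, ih x hx]
    · intro x y hx hy
      simp only [map_add, hx, hy]

end

section
variable {n : ℕ}

/-- weight of a word -/
def wt (y : List (Fin n)) : ℕ := (y.map Fin.val).sum

theorem wt_cons (a : Fin n) (y : List (Fin n)) : wt (a :: y) = a + wt y := by simp [wt]

theorem wt_concat (a : Fin n) (y : List (Fin n)) : wt (y ++ [a]) = wt y + a := by simp [wt]

/-- functionals of lower weight -/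
noncomputable def Low (b : Fin n → (Fin n → ℂ)) (k s : ℕ) : Submodule ℂ (GA n →ₗ[ℂ] ℂ) :=
  Submodule.span ℂ {q | ∃ z : List (Fin n), z.length = k ∧ wt z < s ∧ q = cf (z.map b)}

theorem Low_mono (b : Fin n → (Fin n → ℂ)) (k : ℕ) {s t : ℕ} (h : s ≤ t) :
    Low b k s ≤ Low b k t := by
  apply Submodule.span_mono
  rintro _ ⟨z, h1, h2, rfl⟩
  exact ⟨z, h1, h2.trans_le h, rfl⟩

theorem Low_fox (b : Fin n → (Fin n → ℂ)) (k s : ℕ) (i : Fin n) (q : GA n →ₗ[ℂ] ℂ)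
    (hq : q ∈ Low b k s) : q ∘ₗ fox (b i) ∈ Low b (k + 1) (i + s) := by
  have : Low b k s ≤ (Low b (k + 1) (i + s)).comap (LinearMap.lcomp ℂ ℂ (fox (b i))) := by
    refine Submodule.span_le.2 ?_
    rintro _ ⟨z, h1, h2, rfl⟩
    exact Submodule.subset_span ⟨i :: z, by simp [h1], by rw [wt_cons]; omega, rfl⟩
  exact this hq

theorem fox_span (b : Fin n → (Fin n → ℂ)) (i : Fin n) (q : GA n →ₗ[ℂ] ℂ)
    (N : Submodule ℂ (GA n →ₗ[ℂ] ℂ)) (h : ∀ j < i, q ∘ₗ fox (b j) ∈ N) (r : Fin n → ℂ)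
    (hr : r ∈ Submodule.span ℂ (b '' {j | j < i})) : q ∘ₗ fox r ∈ N := by
  induction hr using Submodule.span_induction with
  | mem x hx => obtain ⟨j, hj, rfl⟩ := hx; exact h j hj
  | zero =>
    have : fox (0 : Fin n → ℂ) = 0 := by
      have := fox_smul (n := n) 0 0
      simpa using this
    rw [this, LinearMap.comp_zero]; exact zero_mem _
  | add x y _ _ hx hy => rw [fox_add, LinearMap.comp_add]; exact add_mem hx hy
  | smul c x _ hx => rw [fox_smul, LinearMap.comp_smul]; exact N.smul_mem c hx

theorem cf_tri (b : Fin n → (Fin n → ℂ)) (μ : Fin n → ℂ) (f : (Fin n → ℂ) →ₗ[ℂ] (Fin n → ℂ))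
    (h : ∀ i, f (b i) - μ i • b i ∈ Submodule.span ℂ (b '' {j | j < i})) (y : List (Fin n)) :
    cf ((y.map b).map f) - (y.map μ).prod • cf (y.map b) ∈ Low b y.length (wt y) := by
  induction y with
  | nil => simp
  | cons a y ih =>
    set q := cf ((y.map b).map f) - (y.map μ).prod • cf (y.map b) with hq
    have hX : cf ((y.map b).map f) = (y.map μ).prod • cf (y.map b) + q := by rw [hq]; abel
    set r := f (b a) - μ a • b a with hr
    have hf : f (b a) = μ a • b a + r := by rw [hr]; abel
    have e : cf (((a :: y).map b).map f) - ((a :: y).map μ).prod • cf ((a :: y).map b)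
        = (y.map μ).prod • (cf (y.map b) ∘ₗ fox r) + μ a • (q ∘ₗ fox (b a)) + q ∘ₗ fox r := by
      simp only [List.map_cons, List.prod_cons, cf]
      rw [hX, hf, fox_add, fox_smul]
      refine LinearMap.ext fun x => ?_
      simp
      ring
    rw [e, List.length_cons, wt_cons]
    refine add_mem (add_mem (Submodule.smul_mem _ _ ?_) (Submodule.smul_mem _ _ ?_)) ?_
    · refine fox_span b a _ _ ?_ r (h a)
      intro j hj
      refine Submodule.subset_span ⟨j :: y, by simp, ?_, rfl⟩
      rw [wt_cons]
      have : (j : ℕ) < a := hj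
      omega
    · exact Low_fox b _ _ a q ih
    · refine fox_span b a _ _ ?_ r (h a)
      intro j hj
      refine Low_mono b _ ?_ (Low_fox b _ _ j q ih)
      have : (j : ℕ) < a := hj
      omega

theorem exists_dual (b : Module.Basis (Fin n) ℂ (Fin n → ℂ)) :
    ∃ v : Fin n → GA n, (∀ i, v i ∈ augI n) ∧ ∀ i j, cf [b j] (v i) = if j = i then 1 else 0 := by
  refine ⟨fun i => ∑ a, b.coord i (Pi.single a 1) • (el (FreeGroup.of a) - 1), ?_, ?_⟩
  · intro i
    exact Submodule.sum_mem _ fun a _ => Submodule.smul_mem _ _ (el_sub_mem _)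
  · intro i j
    have h1 : ∀ a, cf [b j] (el (FreeGroup.of a) - 1) = b j a := by
      intro a
      rw [map_sub, ← el_one, cf_one_el, cf_one_el, hev_of]
      simp [hev]
    rw [map_sum]
    simp only [map_smul, h1]
    have h2 : b j = ∑ a, b j a • Pi.single a (1 : ℂ) := by
      ext c; simp [Finset.sum_apply, Pi.single_apply]
    have h3 : b.coord i (b j) = ∑ a, b j a • b.coord i (Pi.single a 1) := by
      conv_lhs => rw [h2]
      rw [map_sum]; simp only [map_smul]
    have h4 : b.coord i (b j) = if j = i then 1 else 0 := by
      simp [Finsupp.single_apply]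
    rw [← h4, h3]
    refine Finset.sum_congr rfl fun a _ => ?_
    simp [mul_comm]

/-- A word and a homogeneous Lie element detected by it. -/
structure Hom (b : Fin n → (Fin n → ℂ)) (x : List (Fin n)) (w : GA n) : Prop where
  li : w ∈ Li n x.length
  hom : ∀ y : List (Fin n), y.length = x.length → wt y ≠ wt x → cf (y.map b) w = 0

theorem br1 (b : Fin n → (Fin n → ℂ)) (v : Fin n → GA n) (hv : ∀ i, v i ∈ augI n)
    (hbv : ∀ i j, cf [b j] (v i) = if j = i then 1 else 0)
    (k : ℕ) (w : GA n) (hw : w ∈ J n k) (a c : Fin n) (y : List (Fin n))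
    (hy : y.length = k) :
    cf ((c :: y).map b) (w * v a) = (if c = a then 1 else 0) * cf (y.map b) w := by
  have := cf_mul (y.map b) w (by simpa [hy] using hw) [b c] (v a) (by
    rw [List.length_singleton, J_one]; exact hv a)
  rw [hbv] at this
  exact this

theorem br2 (b : Fin n → (Fin n → ℂ)) (v : Fin n → GA n) (hv : ∀ i, v i ∈ augI n)
    (hbv : ∀ i j, cf [b j] (v i) = if j = i then 1 else 0)
    (k : ℕ) (w : GA n) (hw : w ∈ J n k) (a d : Fin n) (y : List (Fin n))
    (hy : y.length = k) :
    cf ((y ++ [d]).map b) (v a * w) = (if d = a then 1 else 0) * cf (y.map b) w := by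
  have := cf_mul [b d] (v a) (by rw [List.length_singleton, J_one]; exact hv a) (y.map b) w
    (by simpa [hy] using hw)
  rw [hbv, mul_comm] at this
  rw [List.map_append]
  exact this

theorem br (b : Fin n → (Fin n → ℂ)) (v : Fin n → GA n) (hv : ∀ i, v i ∈ augI n)
    (hbv : ∀ i j, cf [b j] (v i) = if j = i then 1 else 0)
    (k : ℕ) (w : GA n) (hw : w ∈ J n (k + 1)) (a c d : Fin n) (m : List (Fin n))
    (hm : m.length = k) :
    cf ((c :: (m ++ [d])).map b) (w * v a - v a * w) =
      (if c = a then 1 else 0) * cf ((m ++ [d]).map b) w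
      - (if d = a then 1 else 0) * cf ((c :: m).map b) w := by
  rw [map_sub, br1 b v hv hbv (k + 1) w hw a c (m ++ [d]) (by simp [hm]),
    ← List.cons_append, br2 b v hv hbv (k + 1) w hw a d (c :: m) (by simp [hm])]

theorem Hom_step (b : Fin n → (Fin n → ℂ)) (v : Fin n → GA n) (hv : ∀ i, v i ∈ augI n)
    (hbv : ∀ i j, cf [b j] (v i) = if j = i then 1 else 0)
    (x : List (Fin n)) (w : GA n) (a : Fin n) (h : Hom b x w) :
    Hom b (a :: x) (w * v a - v a * w) where
  li := Li_bracket h.li (augI_le_Li (hv a))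
  hom := by
    intro y hy hwt
    rw [wt_cons] at hwt
    rw [List.length_cons] at hy
    have hJ := Li_le _ h.li
    rw [map_sub]
    have e1 : cf (y.map b) (w * v a) = 0 := by
      cases y with
      | nil => simp at hy
      | cons c y =>
        have hl : y.length = x.length := by simpa using hy
        rw [br1 b v hv hbv _ w hJ a c y hl]
        split_ifs with hc
        · subst hc
          rw [wt_cons] at hwt
          rw [h.hom y hl (by omega), mul_zero]
        · rw [zero_mul]
    have e2 : cf (y.map b) (v a * w) = 0 := by
      rcases List.eq_nil_or_concat y with rfl | ⟨y, c, rfl⟩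
      · simp at hy
      · rw [List.concat_eq_append] at *
        have hl : y.length = x.length := by simpa using hy
        rw [br2 b v hv hbv _ w hJ a c y hl]
        split_ifs with hc
        · subst hc
          rw [wt_concat] at hwt
          rw [h.hom y hl (by omega), mul_zero]
        · rw [zero_mul]
    rw [e1, e2, sub_zero]

theorem step_val (b : Fin n → (Fin n → ℂ)) (v : Fin n → GA n) (hv : ∀ i, v i ∈ augI n)
    (hbv : ∀ i j, cf [b j] (v i) = if j = i then 1 else 0)
    (x : List (Fin n)) (w : GA n) (a o : Fin n) (hao : o ≠ a)
    (hw : w ∈ J n (x ++ [o]).length) :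
    cf ((a :: (x ++ [o])).map b) (w * v a - v a * w) = cf ((x ++ [o]).map b) w := by
  rw [br b v hv hbv x.length w (by simpa using hw) a a o x rfl]
  simp [hao]

theorem exists_good (b : Fin n → (Fin n → ℂ)) (v : Fin n → GA n) (hv : ∀ i, v i ∈ augI n)
    (hbv : ∀ i j, cf [b j] (v i) = if j = i then 1 else 0)
    (hn : 2 ≤ n) (m : ℕ) (hm2 : 2 ≤ m) (hmn : m ≤ n) :
    ∃ (x : List (Fin n)) (w : GA n), Hom b (x ++ [(⟨1, by omega⟩ : Fin n)]) w ∧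
      cf ((x ++ [(⟨1, by omega⟩ : Fin n)]).map b) w = 2 ∧ x.length + 1 = 2 * m ∧
      ∀ μ : Fin n → ℂ, ((x ++ [(⟨1, by omega⟩ : Fin n)]).map μ).prod
        = (∏ i : Fin m, μ ⟨i, by omega⟩) ^ 2 := by
  induction m, hm2 using Nat.le_induction with
  | base =>
    set o : Fin n := ⟨1, by omega⟩ with ho
    set z : Fin n := ⟨0, by omega⟩ with hz
    have hoz : o ≠ z := by simp [ho, hz]
    have hzo : z ≠ o := hoz.symm
    have H1 : Hom b [o] (v o) := by
      refine ⟨augI_le_Li (hv o), ?_⟩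
      intro y hy hwt
      obtain ⟨c, rfl⟩ := List.length_eq_one_iff.1 hy
      rw [List.map_cons, List.map_nil, hbv, if_neg]
      rintro rfl
      exact hwt rfl
    have H2 := Hom_step b v hv hbv _ _ z H1
    have H3 := Hom_step b v hv hbv _ _ o H2
    have H4 := Hom_step b v hv hbv _ _ z H3
    refine ⟨[z, o, z], _, H4, ?_, rfl, ?_⟩
    · have e4 := step_val b v hv hbv [o, z] _ z o hoz (Li_le _ H3.li)
      have e3 := br b v hv hbv 1 _ (Li_le _ H2.li) o o o [z] rfl
      have e2 := br b v hv hbv 0 _ (Li_le _ H1.li) z z o [] rfl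
      have e2' := br b v hv hbv 0 _ (Li_le _ H1.li) z o z [] rfl
      simp only [List.nil_append, List.cons_append, List.map_cons, List.map_nil, hbv, hoz, hzo,
        if_true, if_false] at e2 e2' e3 e4 ⊢
      rw [e4, e3, e2, e2']
      norm_num
    · intro μ
      simp [Fin.prod_univ_two, ← ho, ← hz]
      ring
  | succ m hm ih =>
    obtain ⟨x, w, h1, h2, h3, h4⟩ := ih (by omega)
    set o : Fin n := ⟨1, by omega⟩ with ho
    set a : Fin n := ⟨m, by omega⟩ with ha
    have hoa : o ≠ a := by simp [ho, ha]; omega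
    have H1 := Hom_step b v hv hbv _ _ a h1
    have H2 := Hom_step b v hv hbv _ _ a H1
    refine ⟨a :: a :: x, _, H2, ?_, by simp; omega, ?_⟩
    · have e1 := step_val b v hv hbv x _ a o hoa (Li_le _ h1.li)
      have e2 := step_val b v hv hbv (a :: x) _ a o hoa (Li_le _ H1.li)
      exact (e2.trans e1).trans h2
    · intro μ
      rw [Fin.prod_univ_castSucc]
      have := h4 μ
      simp only [List.cons_append, List.map_cons, List.prod_cons, this, Fin.val_castSucc,
        Fin.val_last, ← ha]
      ring

end

/-- Every non-abelian free group of finite rank `n ≥ 2` has the `R∞`-property: every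
automorphism of `F_n` has infinitely many twisted conjugacy classes. -/
theorem stmt10 (n : ℕ) (hn : 2 ≤ n) (φ : FreeGroup (Fin n) ≃* FreeGroup (Fin n)) :
    Infinite (Quot (TwistedConj φ)) := by
  rw [← not_finite_iff_infinite]
  intro hfin
  obtain ⟨b, μ, hb⟩ := triang n (Fin n → ℂ) (by simp) (fs φ)
  have hdet : (∏ i, μ i) ^ 2 = 1 := by
    rw [← triang_det n _ (fs φ) b μ hb]; exact fs_det φ
  obtain ⟨v, hv, hbv⟩ := exists_dual b
  obtain ⟨x0, w, hw, hval, hlen, hprod⟩ := exists_good b v hv hbv hn n hn le_rfl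
  set x := x0 ++ [(⟨1, by omega⟩ : Fin n)] with hx
  have hmu : (x.map μ).prod = 1 := (hprod μ).trans hdet
  set k := x.length with hk
  have hk1 : 1 ≤ k := by simp [hk, hx]
  set N : Submodule ℂ (GA n) := Li n k ⊓ (Low b k (wt x)).dualCoannihilator with hN
  have hmem : ∀ u, u ∈ N ↔ u ∈ Li n k ∧ ∀ q ∈ Low b k (wt x), q u = 0 := by
    intro u
    rw [hN, Submodule.mem_inf, Submodule.mem_dualCoannihilator]
  have htri : ∀ y : List (Fin n), y.length = k → wt y ≤ wt x → ∀ u ∈ N,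
      cf (y.map b) (Phi φ u) = (y.map μ).prod * cf (y.map b) u := by
    intro y hy hyx u hu
    obtain ⟨hu1, hu2⟩ := (hmem u).1 hu
    have h1 := cf_tri b μ (fs φ) hb y
    rw [hy] at h1
    have h2 := hu2 _ (Low_mono b k hyx h1)
    rw [LinearMap.sub_apply, LinearMap.smul_apply, smul_eq_mul, sub_eq_zero] at h2
    rw [cf_Phi φ _ u (by rw [List.length_map, hy]; exact Li_le k hu1), h2]
  have hlow : ∀ u, u ∈ Li n k → (∀ y : List (Fin n), y.length = k → wt y < wt x →
      cf (y.map b) u = 0) → u ∈ N := by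
    intro u hu h
    refine (hmem u).2 ⟨hu, ?_⟩
    have : Low b k (wt x) ≤ LinearMap.ker (LinearMap.applyₗ (R := ℂ) (M₂ := ℂ) u) := by
      refine Submodule.span_le.2 ?_
      rintro _ ⟨z, h1, h2, rfl⟩
      exact h z h1 h2
    exact fun q hq => this hq
  have hz : ∀ u ∈ N, ∀ y : List (Fin n), y.length = k → wt y < wt x → cf (y.map b) u = 0 :=
    fun u hu y h1 h2 => ((hmem u).1 hu).2 _ (Submodule.subset_span ⟨y, h1, h2, rfl⟩)
  have hPhiN : ∀ u ∈ N, Phi φ u ∈ N := by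
    intro u hu
    refine hlow _ (Phi_Li φ k u ((hmem u).1 hu).1) ?_
    intro y h1 h2
    rw [htri y h1 h2.le u hu, hz u hu y h1 h2, mul_zero]
  have hwN : w ∈ N := hlow w hw.li fun y h1 h2 => hw.hom y h1 h2.ne
  have hK := (lin_lemma (psi φ k) (WW n k) (WW_fg k) (surj_step φ hk1 (PP_all φ hk1))
    (WW_psi φ k)).2 (N.map (qq n k)) (Submodule.map_mono inf_le_left) (by
      rintro _ ⟨u, hu, rfl⟩
      rw [psi_qq]
      exact ⟨_, sub_mem hu (hPhiN u hu), rfl⟩)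
  obtain ⟨_, ⟨u, hu, rfl⟩, he⟩ := hK ⟨w, hwN, rfl⟩
  rw [psi_qq, ← sub_eq_zero, ← map_sub, qq_eq_zero] at he
  have h0 := cf_vanish (x.map b) _ (by rw [List.length_map]; exact he)
  rw [map_sub, map_sub, htri x rfl le_rfl u hu, hmu, one_mul, sub_self, zero_sub, hval] at h0
  norm_num at h0
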